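/- Let g be the probability mass function of a sum of n-1 independent Bernoulli random variables with all parameters p_i in (0, 1/2], and set alpha_k = g(k-1)/(g(k-1)+g(k)) for 0 <= k <= n (with g(-1) = g(n) = 0, alpha_0 = 0, alpha_n = 1). Then the differences alpha_{k+1} - alpha_k are non-increasing in k on {0,...,n-1}. -/

import Mathlib

/-!
Up to a positive factor, the generating polynomial of `pb p` is `∏ (X + rᵢ)` with
`rᵢ = (1 - pᵢ) / pᵢ ≥ 1`. Consequently `α k` is the probability `inc s 1 k` that a distinguished
item of parameter `1` belongs to a random `k`-subset of the items with parameters `1, r₁, …, rₘ`,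
a subset being weighted by the product of the parameters of its complement. The parameter `1` is
the smallest one, and the claim becomes: the inclusion probability of an item with least parameter
is concave in `k`. Equivalently (by complementation), that of an item with largest parameter is
convex, and both are proved together.

Let `x` be a least and `y` a largest parameter, `t` the remaining ones. Conditioning on whether the
other item is included (`inc_cons`) writes `A = inc (y ::ₘ t) x` as a mixture of shifts of
`a = inc t x`, with mixing weight `L = inc (x ::ₘ t) y`, and symmetrically `L` as a mixture of
shifts of `b = inc t y` with weight `A`. With `δ k = a (k+1) - a k` and `ε k = b (k+1) - b k`,
taking second differences gives
`-Δ²A = P + δ * Δ²L` and `Δ²L = Q + ε * (-Δ²A)`,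
where `P, Q ≥ 0` by induction on the number of items. Hence `(1 - δ ε) (-Δ²A) = P + δ Q`.
Inclusion probabilities are monotone in `k` (`inc_mono`), so `0 ≤ δ, ε ≤ 1`, and `δ < 1`
when `t` is nonempty (`inc_diff_lt_one`); so both second differences have the right sign
(`concave_convex`).
-/

/-- Mass function of a Poisson--binomial random variable with parameters `p`,
extended to `ℤ` (zero outside `{0,...,n}`). -/
noncomputable def pb {n : ℕ} (p : Fin n → ℝ) (k : ℤ) : ℝ :=
  if k < 0 then 0
  else ∑ S ∈ Finset.powersetCard k.toNat (Finset.univ : Finset (Fin n)),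
    (∏ i ∈ S, p i) * ∏ i ∈ Sᶜ, (1 - p i)

/-- The `k`-th coefficient of `∏ (X + r)`, the product over `r ∈ s`, extended by zero to `ℤ`. -/
noncomputable def ee (s : Multiset ℝ) (k : ℤ) : ℝ :=
  if k < 0 then 0
  else ((s.map (fun r => Polynomial.X + Polynomial.C r)).prod).coeff k.toNat

lemma ee_neg (s : Multiset ℝ) {k : ℤ} (hk : k < 0) : ee s k = 0 := by
  simp [ee, hk]

lemma ee_zero (k : ℤ) : ee 0 k = if k = 0 then 1 else 0 := by
  unfold ee
  rcases lt_trichotomy k 0 with h | h | h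
  · simp [h, h.ne]
  · simp [h]
  · have h1 : k.toNat ≠ 0 := by omega
    simp [h.not_gt, h.ne', Polynomial.coeff_one, h1]

lemma ee_cons (x : ℝ) (s : Multiset ℝ) (k : ℤ) :
    ee (x ::ₘ s) k = ee s (k - 1) + x * ee s k := by
  unfold ee
  rcases lt_trichotomy k 0 with h | h | h
  · simp [h, show k < 1 by omega]
  · subst h
    simp [add_mul]
  · obtain ⟨n, rfl⟩ : ∃ n : ℕ, k = n + 1 := ⟨(k - 1).toNat, by omega⟩
    have h1 : ((n : ℤ) + 1).toNat = n + 1 := by omega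
    have h2 : ¬ ((n : ℤ) + 1 < 0) := by omega
    simp [h1, h2, add_mul, Polynomial.coeff_X_mul]

lemma ee_nonneg (s : Multiset ℝ) (hs : ∀ r ∈ s, 0 < r) (k : ℤ) : 0 ≤ ee s k := by
  induction s using Multiset.induction_on generalizing k with
  | empty => rw [ee_zero]; split_ifs <;> norm_num
  | cons x s ih =>
    have hs' : ∀ r ∈ s, 0 < r := fun r hr => hs r (Multiset.mem_cons_of_mem hr)
    have hx := hs x (Multiset.mem_cons_self _ _)
    have h1 := ih hs' (k - 1)
    have h2 := ih hs' k
    rw [ee_cons]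
    positivity

lemma ee_pos (s : Multiset ℝ) (hs : ∀ r ∈ s, 0 < r) (k : ℤ) (h0 : 0 ≤ k)
    (hk : k ≤ s.card) : 0 < ee s k := by
  induction s using Multiset.induction_on generalizing k with
  | empty =>
    have : k = 0 := by simp at hk; omega
    simp [ee_zero, this]
  | cons x s ih =>
    have hs' : ∀ r ∈ s, 0 < r := fun r hr => hs r (Multiset.mem_cons_of_mem hr)
    have hx := hs x (Multiset.mem_cons_self _ _)
    rw [Multiset.card_cons] at hk
    push_cast at hk
    rw [ee_cons]
    have h1 := ee_nonneg s hs' (k - 1)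
    have h2 := ee_nonneg s hs' k
    rcases h0.eq_or_lt with h | h
    · have := ih hs' k h0 (by omega)
      positivity
    · have := ih hs' (k - 1) (by omega) (by omega)
      positivity

lemma ee_gt (s : Multiset ℝ) (k : ℤ) (hk : s.card < k) : ee s k = 0 := by
  induction s using Multiset.induction_on generalizing k with
  | empty =>
    have : k ≠ 0 := by simp at hk; omega
    simp [ee_zero, this]
  | cons x s ih =>
    rw [Multiset.card_cons] at hk
    push_cast at hk
    rw [ee_cons, ih _ (by omega), ih _ (by omega)]
    simp

/-- The probability that the item with parameter `x` lies in a random `k`-subset of the items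
with parameters `x ::ₘ s`. Outside `0 ≤ k ≤ s.card + 1` it has the junk value `0`. -/
noncomputable def inc (s : Multiset ℝ) (x : ℝ) (k : ℤ) : ℝ :=
  ee s (k - 1) / ee (x ::ₘ s) k

/-- The identity defining `inc` holds for all `k`, as the numerator vanishes when the
denominator does. -/
lemma ee_mul_inc {s : Multiset ℝ} (hs : ∀ r ∈ s, 0 < r) {x : ℝ} (hx : 0 < x)
    (k : ℤ) : ee (x ::ₘ s) k * inc s x k = ee s (k - 1) := by
  unfold inc
  by_cases h : ee (x ::ₘ s) k = 0
  · have h1 := ee_nonneg s hs (k - 1)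
    have h2 := mul_nonneg hx.le (ee_nonneg s hs k)
    rw [h, zero_mul]
    rw [ee_cons] at h
    linarith
  · field_simp

lemma inc_nonneg {s : Multiset ℝ} (hs : ∀ r ∈ s, 0 < r) {x : ℝ} (hx : 0 < x)
    (k : ℤ) : 0 ≤ inc s x k := by
  have h1 := ee_nonneg s hs (k - 1)
  have h2 := ee_nonneg s hs k
  unfold inc
  rw [ee_cons]
  positivity

lemma inc_le_one {s : Multiset ℝ} (hs : ∀ r ∈ s, 0 < r) {x : ℝ} (hx : 0 < x)
    (k : ℤ) : inc s x k ≤ 1 := by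
  have h1 := ee_nonneg s hs (k - 1)
  have h2 := mul_nonneg hx.le (ee_nonneg s hs k)
  unfold inc
  rw [ee_cons]
  exact div_le_one_of_le₀ (by linarith) (by linarith)

lemma pos_cons {s : Multiset ℝ} (hs : ∀ r ∈ s, 0 < r) {x : ℝ} (hx : 0 < x) :
    ∀ r ∈ x ::ₘ s, 0 < r := by
  intro r hr
  rcases Multiset.mem_cons.1 hr with rfl | h
  exacts [hx, hs r h]

lemma inc_bot (s : Multiset ℝ) (x : ℝ) : inc s x 0 = 0 := by
  simp [inc, ee_neg]

lemma inc_top {s : Multiset ℝ} (hs : ∀ r ∈ s, 0 < r) (x : ℝ) (k : ℤ) (hk : k = s.card + 1) :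
    inc s x k = 1 := by
  unfold inc
  rw [ee_cons, ee_gt s k (by omega), mul_zero, add_zero]
  exact div_self (ee_pos s hs _ (by omega) (by omega)).ne'

/-- Law of total probability: condition on whether the item with parameter `y` is included. -/
lemma inc_cons {s : Multiset ℝ} (hs : ∀ r ∈ s, 0 < r) {x y : ℝ} (hx : 0 < x) (hy : 0 < y)
    (k : ℤ) (h0 : 0 ≤ k) (hk : k ≤ s.card + 2) :
    inc (y ::ₘ s) x k =
      inc (x ::ₘ s) y k * inc s x (k - 1) + (1 - inc (x ::ₘ s) y k) * inc s x k := by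
  have hB : 0 < ee (y ::ₘ x ::ₘ s) k :=
    ee_pos _ (pos_cons (pos_cons hs hx) hy) k h0 (by simp; omega)
  have e1 := ee_mul_inc hs hx (k - 1)
  have e2 := ee_mul_inc hs hx k
  have e3 := ee_mul_inc (pos_cons hs hx) hy k
  have e4 := ee_mul_inc (pos_cons hs hy) hx k
  rw [Multiset.cons_swap] at e4
  have e5 := ee_cons y (x ::ₘ s) k
  have e6 := ee_cons y s (k - 1)
  apply mul_left_cancel₀ hB.ne'
  linear_combination e4 + e6 - e1 - y * e2 + (inc s x k - inc s x (k - 1)) * e3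
    - inc s x k * e5

/-- Monotonicity of inclusion probabilities, equivalent to log-concavity of `ee s`. -/
lemma inc_mono {s : Multiset ℝ} (hs : ∀ r ∈ s, 0 < r) {x : ℝ} (hx : 0 < x)
    (k : ℤ) (h0 : 0 ≤ k) (hk : k ≤ s.card) : inc s x k ≤ inc s x (k + 1) := by
  induction s using Multiset.induction_on generalizing k with
  | empty =>
    have : k = 0 := by simp at hk; omega
    subst this
    rw [inc_bot]
    exact inc_nonneg hs hx _
  | cons y s ih =>
    have hs' : ∀ r ∈ s, 0 < r := fun r hr => hs r (Multiset.mem_cons_of_mem hr)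
    have hy := hs y (Multiset.mem_cons_self _ _)
    rw [Multiset.card_cons] at hk
    push_cast at hk
    rw [inc_cons hs' hx hy k h0 (by omega), inc_cons hs' hx hy (k + 1) (by omega) (by omega),
      show k + 1 - 1 = k by ring]
    have l1 := inc_nonneg (pos_cons hs' hx) hy k
    have l2 := inc_le_one (pos_cons hs' hx) hy (k + 1)
    have t1 : 0 ≤ inc (x ::ₘ s) y k * (inc s x k - inc s x (k - 1)) := by
      rcases h0.eq_or_lt with h | h
      · rw [← h, inc_bot (x ::ₘ s) y]; simp
      · have := ih hs' (k - 1) (by omega) (by omega)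
        rw [sub_add_cancel] at this
        exact mul_nonneg l1 (by linarith)
    have t2 : 0 ≤ (1 - inc (x ::ₘ s) y (k + 1)) * (inc s x (k + 1) - inc s x k) := by
      rcases hk.eq_or_lt with h | h
      · rw [inc_top (pos_cons hs' hx) y (k + 1) (by simp; omega)]; simp
      · exact mul_nonneg (by linarith) (by linarith [ih hs' k h0 (by omega)])
    linarith

lemma inc_diff_lt_one {s : Multiset ℝ} (hs : ∀ r ∈ s, 0 < r) {x : ℝ} (hx : 0 < x)
    (hc : 1 ≤ s.card) (k : ℤ) (h0 : 0 ≤ k) (hk : k ≤ s.card) :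
    inc s x (k + 1) - inc s x k < 1 := by
  rcases h0.eq_or_lt with h | h
  · subst h
    rw [inc_bot, sub_zero]
    have h1 := ee_pos s hs 0 (by omega) (by omega)
    have h2 := ee_pos s hs 1 (by omega) (by omega)
    unfold inc
    rw [ee_cons]
    norm_num
    rw [div_lt_one (by positivity)]
    have := mul_pos hx h2
    linarith
  · have h1 := ee_pos s hs (k - 1) (by omega) (by omega)
    have h2 := ee_pos s hs k (by omega) (by omega)
    have h3 := inc_le_one hs hx (k + 1)
    have h4 : 0 < inc s x k := by
      unfold inc
      rw [ee_cons]
      positivity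
    linarith

/-- Second difference of a mixture `A j = L j * a (j - 1) + (1 - L j) * a j`, at
consecutive indices. -/
lemma second_diff {am a0 a1 a2 A0 A1 A2 L0 L1 L2 : ℝ}
    (h0 : A0 = L0 * am + (1 - L0) * a0) (h1 : A1 = L1 * a0 + (1 - L1) * a1)
    (h2 : A2 = L2 * a1 + (1 - L2) * a2) :
    2 * A1 - A0 - A2 = L0 * (2 * a0 - am - a1) + (1 - L2) * (2 * a1 - a0 - a2)
      + (a1 - a0) * (L0 + L2 - 2 * L1) := by
  subst h0 h1 h2; ring

lemma exists_cons_max (t : Multiset ℝ) (h : t ≠ 0) :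
    ∃ y t', t = y ::ₘ t' ∧ ∀ r ∈ t', r ≤ y := by
  obtain ⟨y, hy, hm⟩ := t.toFinset.exists_max_image id (by simpa using h)
  rw [Multiset.mem_toFinset] at hy
  obtain ⟨t', rfl⟩ := Multiset.exists_cons_of_mem hy
  exact ⟨y, t', rfl, fun r hr => hm r (by simp [hr])⟩

lemma exists_cons_min (t : Multiset ℝ) (h : t ≠ 0) :
    ∃ y t', t = y ::ₘ t' ∧ ∀ r ∈ t', y ≤ r := by
  obtain ⟨y, hy, hm⟩ := t.toFinset.exists_min_image id (by simpa using h)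
  rw [Multiset.mem_toFinset] at hy
  obtain ⟨t', rfl⟩ := Multiset.exists_cons_of_mem hy
  exact ⟨y, t', rfl, fun r hr => hm r (by simp [hr])⟩

/-- With `x` a least and `y` a largest parameter, the inclusion probability of `x` is concave
and that of `y` is convex. -/
lemma concave_convex (n : ℕ) : ∀ (t : Multiset ℝ) (x y : ℝ), t.card = n → (∀ r ∈ t, 0 < r) →
    0 < x → x ≤ y → (∀ r ∈ t, x ≤ r) → (∀ r ∈ t, r ≤ y) → ∀ k : ℤ, 0 ≤ k → k ≤ n →
    0 ≤ 2 * inc (y ::ₘ t) x (k + 1) - inc (y ::ₘ t) x k - inc (y ::ₘ t) x (k + 2) ∧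
    0 ≤ inc (x ::ₘ t) y k + inc (x ::ₘ t) y (k + 2) - 2 * inc (x ::ₘ t) y (k + 1) := by
  induction n with
  | zero =>
    intro t x y hc ht hx hxy _ _ k h0 hk
    have hk' : k = 0 := by push_cast at hk; omega
    subst hk'
    rw [Multiset.card_eq_zero] at hc
    subst hc
    have hy : 0 < y := by linarith
    rw [inc_bot, inc_bot, inc_top (pos_cons ht hx) y (0 + 2) (by simp),
      inc_top (pos_cons ht hy) x (0 + 2) (by simp)]
    have e1 : inc (y ::ₘ 0) x (0 + 1) = y / (x + y) := by
      rw [inc, ee_cons]; simp only [ee_cons, ee_zero]; norm_num [add_comm]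
    have e2 : inc (x ::ₘ 0) y (0 + 1) = x / (x + y) := by
      rw [inc, ee_cons]; simp only [ee_cons, ee_zero]; norm_num
    rw [e1, e2]
    have e3 : x / (x + y) ≤ 1 / 2 := by
      rw [div_le_div_iff₀ (by linarith) (by norm_num)]; linarith
    have e4 : y / (x + y) = 1 - x / (x + y) := by field_simp; ring
    constructor <;> linarith
  | succ n ih =>
    intro t x y hc ht hx hxy hxt hty k h0 hk
    have hy : 0 < y := by linarith
    have ht0 : t ≠ 0 := by rintro rfl; simp at hc
    push_cast at hk
    have cx : ∀ j : ℤ, 0 ≤ j → j ≤ n → 0 ≤ 2 * inc t x (j + 1) - inc t x j - inc t x (j + 2) := by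
      obtain ⟨z, t', rfl, hz⟩ := exists_cons_max t ht0
      intro j hj hjn
      exact (ih t' x z (by simpa using hc) (fun r hr => ht r (Multiset.mem_cons_of_mem hr)) hx
        (hxt z (Multiset.mem_cons_self _ _)) (fun r hr => hxt r (Multiset.mem_cons_of_mem hr))
        hz j hj hjn).1
    have cy : ∀ j : ℤ, 0 ≤ j → j ≤ n → 0 ≤ inc t y j + inc t y (j + 2) - 2 * inc t y (j + 1) := by
      obtain ⟨z, t', rfl, hz⟩ := exists_cons_min t ht0
      intro j hj hjn
      exact (ih t' z y (by simpa using hc) (fun r hr => ht r (Multiset.mem_cons_of_mem hr))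
        (ht z (Multiset.mem_cons_self _ _)) (hty z (Multiset.mem_cons_self _ _)) hz
        (fun r hr => hty r (Multiset.mem_cons_of_mem hr)) j hj hjn).2
    have A0 := inc_cons ht hx hy k h0 (by omega)
    have A1 := inc_cons ht hx hy (k + 1) (by omega) (by omega)
    have A2 := inc_cons ht hx hy (k + 2) (by omega) (by omega)
    have L0 := inc_cons ht hy hx k h0 (by omega)
    have L1 := inc_cons ht hy hx (k + 1) (by omega) (by omega)
    have L2 := inc_cons ht hy hx (k + 2) (by omega) (by omega)
    rw [show k + 1 - 1 = k by ring] at A1 L1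
    rw [show k + 2 - 1 = k + 1 by ring] at A2 L2
    have EX := second_diff A0 A1 A2
    have EY := second_diff L0 L1 L2
    -- The weights vanish exactly where the second differences of the smaller family
    -- would involve indices out of range.
    have P1 : 0 ≤ inc (x ::ₘ t) y k * (2 * inc t x k - inc t x (k - 1) - inc t x (k + 1)) := by
      rcases h0.eq_or_lt with h | h
      · rw [← h, inc_bot (x ::ₘ t) y]; simp
      · have := cx (k - 1) (by omega) (by omega)
        rw [sub_add_cancel, show k - 1 + 2 = k + 1 by ring] at this
        exact mul_nonneg (inc_nonneg (pos_cons ht hx) hy k) this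
    have P2 : 0 ≤ (1 - inc (x ::ₘ t) y (k + 2)) *
        (2 * inc t x (k + 1) - inc t x k - inc t x (k + 2)) := by
      rcases hk.eq_or_lt with h | h
      · rw [inc_top (pos_cons ht hx) y (k + 2) (by simp; omega)]; simp
      · exact mul_nonneg (by linarith [inc_le_one (pos_cons ht hx) hy (k + 2)])
          (cx k h0 (by omega))
    have Q1 : inc (y ::ₘ t) x k * (2 * inc t y k - inc t y (k - 1) - inc t y (k + 1)) ≤ 0 := by
      rcases h0.eq_or_lt with h | h
      · rw [← h, inc_bot (y ::ₘ t) x]; simp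
      · have := cy (k - 1) (by omega) (by omega)
        rw [sub_add_cancel, show k - 1 + 2 = k + 1 by ring] at this
        exact mul_nonpos_of_nonneg_of_nonpos (inc_nonneg (pos_cons ht hy) hx k) (by linarith)
    have Q2 : (1 - inc (y ::ₘ t) x (k + 2)) *
        (2 * inc t y (k + 1) - inc t y k - inc t y (k + 2)) ≤ 0 := by
      rcases hk.eq_or_lt with h | h
      · rw [inc_top (pos_cons ht hy) x (k + 2) (by simp; omega)]; simp
      · exact mul_nonpos_of_nonneg_of_nonpos
          (by linarith [inc_le_one (pos_cons ht hy) hx (k + 2)])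
          (by linarith [cy k h0 (by omega)])
    have d0 := inc_mono ht hx k h0 (by omega)
    have d1 := inc_diff_lt_one ht hx (by omega) k h0 (by omega)
    have f0 := inc_mono ht hy k h0 (by omega)
    have f1 : inc t y (k + 1) - inc t y k ≤ 1 := by
      linarith [inc_le_one ht hy (k + 1), inc_nonneg ht hy k]
    set δ := inc t x (k + 1) - inc t x k with hδ
    set ε := inc t y (k + 1) - inc t y k with hε
    set U := 2 * inc (y ::ₘ t) x (k + 1) - inc (y ::ₘ t) x k - inc (y ::ₘ t) x (k + 2) with hU
    set V := inc (x ::ₘ t) y k + inc (x ::ₘ t) y (k + 2) - 2 * inc (x ::ₘ t) y (k + 1) with hV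
    have hδ0 : 0 ≤ δ := by linarith
    have hε0 : 0 ≤ ε := by linarith
    have hU1 : δ * V ≤ U := by linarith
    have hV1 : ε * U ≤ V := by
      have : inc (y ::ₘ t) x k + inc (y ::ₘ t) x (k + 2) - 2 * inc (y ::ₘ t) x (k + 1) = -U := by
        rw [hU]; ring
      rw [this] at EY
      linarith
    have hprod : δ * ε < 1 := by nlinarith
    have hU0 : 0 ≤ U := by
      have h1 : 0 ≤ (1 - δ * ε) * U := by nlinarith [mul_le_mul_of_nonneg_left hV1 hδ0]
      exact nonneg_of_mul_nonneg_right h1 (by linarith)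
    exact ⟨hU0, le_trans (mul_nonneg hε0 hU0) hV1⟩

/-- The Poisson–binomial mass function is proportional to the coefficients of
`∏ (X + (1 - pᵢ) / pᵢ)`. -/
lemma pb_eq {m : ℕ} (p : Fin m → ℝ) (hp : ∀ i, 0 < p i) (k : ℤ) :
    pb p k = (∏ i, p i) *
      ee ((Finset.univ : Finset (Fin m)).val.map (fun i => (1 - p i) / p i)) k := by
  unfold pb ee
  split_ifs with h
  · simp
  · have h1 : (∏ i, (Polynomial.C (p i) * Polynomial.X + Polynomial.C (1 - p i)))
        = Polynomial.C (∏ i, p i) * (((Finset.univ : Finset (Fin m)).val.map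
          (fun i => (1 - p i) / p i)).map (fun r => Polynomial.X + Polynomial.C r)).prod := by
      rw [Multiset.map_map]
      change _ = _ * ∏ i, (Polynomial.X + Polynomial.C ((1 - p i) / p i))
      rw [map_prod, ← Finset.prod_mul_distrib]
      refine Finset.prod_congr rfl fun i _ => ?_
      rw [mul_add, ← Polynomial.C_mul, mul_div_cancel₀ _ (hp i).ne']
    rw [← Polynomial.coeff_C_mul, ← h1, Finset.prod_add, Polynomial.finsetSum_coeff,
      Finset.powersetCard_eq_filter, Finset.sum_filter]
    refine Finset.sum_congr rfl fun S _ => ?_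
    rw [Finset.prod_mul_distrib, Finset.prod_const, ← map_prod, ← map_prod, mul_right_comm,
      ← Polynomial.C_mul, Polynomial.coeff_C_mul, Polynomial.coeff_X_pow,
      ← Finset.compl_eq_univ_sdiff]
    simp [eq_comm]

theorem stmt10 (m : ℕ) (p : Fin m → ℝ)
    (hp : ∀ i, p i ∈ Set.Ioc (0 : ℝ) (1 / 2))
    (g : ℤ → ℝ) (hg : g = pb p)
    (α : ℤ → ℝ)
    (hα : ∀ k : ℤ, 1 ≤ k → k ≤ (m : ℤ) → α k = g (k - 1) / (g (k - 1) + g k))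
    (hα0 : α 0 = 0) (hαn : α (m + 1) = 1) :
    ∀ k : ℤ, 0 ≤ k → k + 1 ≤ (m : ℤ) → α (k + 2) - α (k + 1) ≤ α (k + 1) - α k := by
  intro k h0 hk
  have hp0 : ∀ i, 0 < p i := fun i => (hp i).1
  set s := (Finset.univ : Finset (Fin m)).val.map (fun i => (1 - p i) / p i) with hs
  have hcard : s.card = m := by simp [hs]
  have hs1 : ∀ r ∈ s, 1 ≤ r := by
    intro r hr
    obtain ⟨i, -, rfl⟩ := Multiset.mem_map.1 hr
    rw [le_div_iff₀ (hp0 i)]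
    linarith [(hp i).2]
  have hspos : ∀ r ∈ s, 0 < r := fun r hr => by linarith [hs1 r hr]
  have key : ∀ j : ℤ, 0 ≤ j → j ≤ m + 1 → α j = inc s 1 j := by
    intro j hj hjm
    rcases hj.eq_or_lt with h | h
    · rw [← h, hα0, inc_bot]
    rcases hjm.eq_or_lt with h' | h'
    · rw [inc_top hspos 1 j (by omega), h', hαn]
    · have hP : (∏ i, p i) ≠ 0 := (Finset.prod_pos fun i _ => hp0 i).ne'
      rw [hα j (by omega) (by omega), hg, pb_eq p hp0, pb_eq p hp0, ← hs, inc, ee_cons,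
        ← mul_add, mul_div_mul_left _ _ hP, one_mul]
  rw [key k h0 (by omega), key (k + 1) (by omega) (by omega), key (k + 2) (by omega) (by omega)]
  have hs0 : s ≠ 0 := by
    intro h
    rw [h] at hcard
    simp at hcard
    omega
  obtain ⟨y, t, hst, hty⟩ := exists_cons_max s hs0
  rw [hst] at hs1 hspos hcard ⊢
  rw [Multiset.card_cons] at hcard
  have := (concave_convex t.card t 1 y rfl (fun r hr => hspos r (Multiset.mem_cons_of_mem hr))
    one_pos (hs1 y (Multiset.mem_cons_self _ _))
    (fun r hr => hs1 r (Multiset.mem_cons_of_mem hr)) hty k h0 (by omega)).1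
  linarith
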